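/- (Divergence-free modified non-relativistic helicity current.) Let c > 0, let 𝒜⁰ : ℝ × ℝ³ → ℝ and 𝓐 : ℝ × ℝ³ → ℝ³ be C², let θ : ℝ × ℝ³ → ℝ be C¹, and suppose the non-relativistic (γ ≡ 1) barotropic equation of motion ℰ + (v/c)×ℬ = −c⁻¹ ∇θ holds at every point, where ℰ = −∇𝒜⁰ − c⁻¹∂_t𝓐, ℬ = ∇×𝓐, and v : ℝ × ℝ³ → ℝ³ is any velocity field. Then the modified helicity four-current K'⁰ = 𝓐·ℬ, K' = 𝒜⁰ℬ + ℰ×𝓐 − 2c⁻¹θℬ is divergence-free: c⁻¹ ∂_t(𝓐·ℬ) + ∇·(𝒜⁰ℬ + ℰ×𝓐 − 2c⁻¹ θ ℬ) = 0 at every point. -/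

import Mathlib

open MeasureTheory

noncomputable section

abbrev V3 := Fin 3 → ℝ

/-- Euclidean dot product on ℝ³. -/
def dot3 (a b : V3) : ℝ := ∑ i, a i * b i

/-- Cross product on ℝ³. -/
def cross3 (a b : V3) : V3 := fun i => a (i + 1) * b (i + 2) - a (i + 2) * b (i + 1)

/-- Time derivative ∂_t of a scalar function on ℝ × ℝ³. -/
def pdt (f : ℝ × V3 → ℝ) (p : ℝ × V3) : ℝ := fderiv ℝ f p ((1 : ℝ), (0 : V3))

/-- Spatial derivative ∂_j of a scalar function on ℝ × ℝ³. -/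
def pdx (j : Fin 3) (f : ℝ × V3 → ℝ) (p : ℝ × V3) : ℝ :=
  fderiv ℝ f p ((0 : ℝ), Pi.single j 1)

/-- Spatial gradient. -/
def grad3 (f : ℝ × V3 → ℝ) (p : ℝ × V3) : V3 := fun j => pdx j f p

/-- Spatial curl. -/
def curl3 (A : ℝ × V3 → V3) (p : ℝ × V3) : V3 := fun i =>
  pdx (i + 1) (fun q => A q (i + 2)) p - pdx (i + 2) (fun q => A q (i + 1)) p

/-- Spatial divergence. -/
def div3 (A : ℝ × V3 → V3) (p : ℝ × V3) : ℝ := ∑ j, pdx j (fun q => A q j) p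

/-- ℰ = −∇𝒜⁰ − c⁻¹ ∂_t 𝓐. -/
def Efield (c : ℝ) (A0 : ℝ × V3 → ℝ) (A : ℝ × V3 → V3) (p : ℝ × V3) : V3 := fun i =>
  -grad3 A0 p i - c⁻¹ * fderiv ℝ (fun q => A q i) p ((1 : ℝ), (0 : V3))

/-- ℬ = ∇×𝓐. -/
def Bfield (A : ℝ × V3 → V3) (p : ℝ × V3) : V3 := curl3 A p

def DD (w : ℝ × V3) (f : ℝ × V3 → ℝ) (p : ℝ × V3) : ℝ := fderiv ℝ f p w

theorem DD_diff (w : ℝ × V3) (f : ℝ × V3 → ℝ) (hf : ContDiff ℝ 2 f) :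
    Differentiable ℝ (DD w f) := by
  have h : ContDiff ℝ 1 (fderiv ℝ f) := hf.fderiv_right (by norm_num)
  have h2 := h.differentiable (by norm_num)
  unfold DD
  fun_prop

theorem DD_comm (u w : ℝ × V3) (f : ℝ × V3 → ℝ) (hf : ContDiff ℝ 2 f) (p : ℝ × V3) :
    DD u (DD w f) p = DD w (DD u f) p := by
  have h : ContDiff ℝ 1 (fderiv ℝ f) := hf.fderiv_right (by norm_num)
  have h2 := h.differentiable (by norm_num)
  have key : ∀ u w, DD u (DD w f) p = fderiv ℝ (fderiv ℝ f) p u w := by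
    intro u w
    unfold DD
    rw [fderiv_clm_apply (h2 p) (by fun_prop)]
    simp
  rw [key, key]
  exact (hf.contDiffAt.isSymmSndFDerivAt (by simp)) u w

theorem DD_add (w : ℝ × V3) (f g : ℝ × V3 → ℝ) (p) (hf : Differentiable ℝ f)
    (hg : Differentiable ℝ g) : DD w (fun q => f q + g q) p = DD w f p + DD w g p := by
  unfold DD; rw [fderiv_fun_add (hf p) (hg p)]; simp

theorem DD_sub (w : ℝ × V3) (f g : ℝ × V3 → ℝ) (p) (hf : Differentiable ℝ f)
    (hg : Differentiable ℝ g) : DD w (fun q => f q - g q) p = DD w f p - DD w g p := by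
  unfold DD; rw [fderiv_fun_sub (hf p) (hg p)]; simp

theorem DD_neg (w : ℝ × V3) (f : ℝ × V3 → ℝ) (p) :
    DD w (fun q => - f q) p = - DD w f p := by
  unfold DD; rw [fderiv_fun_neg]; simp

theorem DD_mul (w : ℝ × V3) (f g : ℝ × V3 → ℝ) (p) (hf : Differentiable ℝ f)
    (hg : Differentiable ℝ g) :
    DD w (fun q => f q * g q) p = DD w f p * g p + f p * DD w g p := by
  unfold DD; rw [fderiv_fun_mul (hf p) (hg p)]; simp; ring

theorem DD_const (w : ℝ × V3) (k : ℝ) (p) : DD w (fun _ => k) p = 0 := by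
  unfold DD; simp

theorem pdt_DD (f) (p) : pdt f p = DD (1, 0) f p := rfl
theorem pdx_DD (j f) (p) : pdx j f p = DD (0, Pi.single j 1) f p := rfl

/-- In the non-relativistic (γ ≡ 1) barotropic case ℰ + (v/c)×ℬ = −c⁻¹∇θ, the modified
    helicity four-current K'⁰ = 𝓐·ℬ, K' = 𝒜⁰ℬ + ℰ×𝓐 − 2c⁻¹θℬ is divergence-free. -/
theorem modified_helicity_current_divergence_free (c : ℝ) (hc : 0 < c)
    (A0 : ℝ × V3 → ℝ) (A : ℝ × V3 → V3) (θ : ℝ × V3 → ℝ) (v : ℝ × V3 → V3)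
    (hA0 : ContDiff ℝ 2 A0) (hA : ContDiff ℝ 2 A) (hθ : ContDiff ℝ 1 θ)
    (heqm : ∀ p, ∀ i : Fin 3,
      Efield c A0 A p i + cross3 (v p) (Bfield A p) i / c = -c⁻¹ * grad3 θ p i) :
    ∀ p : ℝ × V3,
      c⁻¹ * pdt (fun q => dot3 (A q) (Bfield A q)) p
        + div3 (fun q i =>
            A0 q * Bfield A q i + cross3 (Efield c A0 A q) (A q) i
              - 2 * c⁻¹ * θ q * Bfield A q i) p
      = 0 := by
  intro p
  have hθ' : Differentiable ℝ θ := hθ.differentiable (by norm_num)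
  have hA0' : Differentiable ℝ A0 := hA0.differentiable (by norm_num)
  have e0 := heqm p 0
  have e1 := heqm p 1
  have e2 := heqm p 2
  clear heqm
  have ha : ∀ i, ContDiff ℝ 2 (fun q => A q i) := fun i => by fun_prop
  obtain ⟨a, haA⟩ : ∃ a : Fin 3 → ℝ × V3 → ℝ, a = fun i q => A q i := ⟨_, rfl⟩
  have hAa : ∀ q i, A q i = a i q := by intro q i; rw [haA]
  have hE : ∀ q i, Efield c A0 A q i
      = - DD (0, Pi.single i 1) A0 q - c⁻¹ * DD (1, 0) (a i) q := by
    intro q i; rw [haA]; rfl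
  have hB : ∀ q i, Bfield A q i = DD (0, Pi.single (i+1) 1) (a (i+2)) q
      - DD (0, Pi.single (i+2) 1) (a (i+1)) q := by
    intro q i; rw [haA]; rfl
  have hac : ∀ i, ContDiff ℝ 2 (a i) := by intro i; rw [haA]; exact ha i
  have had : ∀ i, Differentiable ℝ (a i) := fun i => (hac i).differentiable (by norm_num)
  have d1 : ∀ w i, Differentiable ℝ (DD w (a i)) := fun w i => DD_diff w _ (hac i)
  have d0 : ∀ w, Differentiable ℝ (DD w A0) := fun w => DD_diff w _ hA0
  have s1 : ∀ u w i, DD u (DD w (a i)) p = DD w (DD u (a i)) p :=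
    fun u w i => DD_comm u w _ (hac i) p
  have s0 : ∀ u w, DD u (DD w A0) p = DD w (DD u A0) p := fun u w => DD_comm u w _ hA0 p
  have f1 : (1 : Fin 3) + 1 = 2 := rfl
  have f2 : (1 : Fin 3) + 2 = 0 := rfl
  have f3 : (2 : Fin 3) + 1 = 0 := rfl
  have f4 : (2 : Fin 3) + 2 = 1 := rfl
  simp only [grad3, cross3, hE, hB, pdx_DD, zero_add, f1, f2, f3, f4] at e0 e1 e2
  simp only [dot3, div3, cross3, hE, hB, hAa, pdx_DD, pdt_DD, Fin.sum_univ_three,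
    zero_add, f1, f2, f3, f4]
  clear hE hB hAa haA ha hA
  generalize hx0 : ((0 : ℝ), (Pi.single 0 1 : V3)) = x0 at *
  generalize hx1 : ((0 : ℝ), (Pi.single 1 1 : V3)) = x1 at *
  generalize hx2 : ((0 : ℝ), (Pi.single 2 1 : V3)) = x2 at *
  generalize hx3 : ((1 : ℝ), (0 : V3)) = x3 at *
  simp (disch := fun_prop) only [DD_add, DD_sub, DD_mul, DD_neg, DD_const]
  simp only [s1 x1 x0, s1 x2 x0, s1 x2 x1, s1 x3 x0, s1 x3 x1, s1 x3 x2,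
    s0 x1 x0, s0 x2 x0, s0 x2 x1]
  linear_combination
    (-2 * (DD x1 (a 2) p - DD x2 (a 1) p)) * e0 + (-2 * (DD x2 (a 0) p - DD x0 (a 2) p)) * e1
    + (-2 * (DD x0 (a 1) p - DD x1 (a 0) p)) * e2
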